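/- Let n ≥ 1, let λ : Fin n → ℝ, and let h : Fin n → Fin n → Fin n → ℝ be fully symmetric, i.e. h i j k is invariant under all permutations of (i,j,k). Define Ξ = Σ_{i,j,k} (h i j k)²·(λ_k² − 2 λ_i λ_j), S = Σ_i λ_i², |h|² = Σ_{i,j,k} (h i j k)², f = Σ_{i,j} (λ_i − λ_j)²·λ_i²·λ_j², and C₁ = (2√6 + 3)/(21√6 + 103/2)^{1/3}. Then 3Ξ ≤ (S + C₁·f^{1/3})·|h|², where f^{1/3} is the real cube root of the nonnegative number f. -/

import Mathlib

noncomputable def C₁ : ℝ :=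
  (2 * Real.sqrt 6 + 3) / (21 * Real.sqrt 6 + 103 / 2) ^ ((1 : ℝ) / 3)

/-!
Averaging over the rotations of `(i, j, k)` turns `3Ξ` into a sum of the `h_{ijk}²` with
coefficients `λ_i² + λ_j² + λ_k² - 2 (λ_i λ_j + λ_j λ_k + λ_k λ_i)`, so it is enough to bound each
coefficient by `S + C₁ f^{1/3}`. Both `S` and `f` are sums of nonnegative terms; keep only those
involving `i`, `j` and `k`, cancel the squares that occur in `S`, and compare the cube of what
remains with `f`. For three distinct indices two of the three values have the same sign, and the
power mean inequality gives the constant `4 < C₁³`. If exactly two indices coincide, the quotient to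
be bounded depends only on the ratio of the two values, and its maximum is `C₁³ = 24√6 - 54`.
-/

section PairGap

variable {R : Type*} [CommRing R]

/-- The contribution `(a - b)² a² b²` of a pair of principal curvatures to the invariant `f`. -/
def pairGap (a b : R) : R :=
  (a - b) ^ 2 * a ^ 2 * b ^ 2

/-- The invariant `f = ∑ (λ_i - λ_j)² λ_i² λ_j²`, where the sum is over ordered pairs, so that each
pair of distinct indices counts twice. -/
def gapInvariant {ι : Type*} [Fintype ι] (lam : ι → R) : R :=
  ∑ i, ∑ j, pairGap (lam i) (lam j)

lemma pairGap_self (a : R) : pairGap a a = 0 := by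
  simp [pairGap]

lemma pairGap_comm (a b : R) : pairGap a b = pairGap b a := by
  unfold pairGap
  ring

variable [LinearOrder R] [IsStrictOrderedRing R]

lemma pairGap_nonneg (a b : R) : 0 ≤ pairGap a b := by
  unfold pairGap
  positivity

lemma four_mul_neg_mul_pow_three_le_pairGap (a b : R) : 4 * (-(a * b)) ^ 3 ≤ pairGap a b := by
  have hsq : pairGap a b - 4 * (-(a * b)) ^ 3 = ((a + b) * (a * b)) ^ 2 := by
    unfold pairGap
    ring
  exact sub_nonneg.1 (hsq ▸ sq_nonneg _)

lemma add_pow_three_le_four_mul {p q : R} (hpq : 0 ≤ p + q) :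
    (p + q) ^ 3 ≤ 4 * (p ^ 3 + q ^ 3) := by
  linear_combination 3 * mul_nonneg hpq (sq_nonneg (p - q))

lemma neg_pow_three_le_sum_pairGap_of_mul_nonneg {a b : R} (c : R) (hab : 0 ≤ a * b) :
    (-(a * b + b * c + c * a)) ^ 3 ≤ pairGap a b + pairGap b c + pairGap c a := by
  have hdrop : (-(a * b + b * c + c * a)) ^ 3 ≤ (-(b * c) + -(c * a)) ^ 3 :=
    Odd.pow_le_pow (by decide) |>.2 (by linarith)
  have hgap := pairGap_nonneg a b
  rcases le_total 0 (-(b * c) + -(c * a)) with hpos | hneg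
  · linarith [add_pow_three_le_four_mul hpos, four_mul_neg_mul_pow_three_le_pairGap b c,
      four_mul_neg_mul_pow_three_le_pairGap c a]
  · have hcube : (-(b * c) + -(c * a)) ^ 3 ≤ 0 := Odd.pow_nonpos (by decide) hneg
    linarith [pairGap_nonneg b c, pairGap_nonneg c a]

lemma neg_pow_three_le_sum_pairGap (a b c : R) :
    (-(a * b + b * c + c * a)) ^ 3 ≤ pairGap a b + pairGap b c + pairGap c a := by
  rcases mul_nonneg_of_three a b c with hab | hbc | hca
  · exact neg_pow_three_le_sum_pairGap_of_mul_nonneg c hab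
  · linear_combination neg_pow_three_le_sum_pairGap_of_mul_nonneg a hbc
  · linear_combination neg_pow_three_le_sum_pairGap_of_mul_nonneg b hca

section Sums

variable {ι : Type*} [Fintype ι] (lam : ι → R)

lemma gapInvariant_nonneg : 0 ≤ gapInvariant lam :=
  Finset.sum_nonneg fun _ _ => Finset.sum_nonneg fun _ _ => pairGap_nonneg _ _

lemma sum_sum_pairGap_le_gapInvariant (s : Finset ι) :
    ∑ i ∈ s, ∑ j ∈ s, pairGap (lam i) (lam j) ≤ gapInvariant lam :=
  calc ∑ i ∈ s, ∑ j ∈ s, pairGap (lam i) (lam j)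
      ≤ ∑ i ∈ s, ∑ j, pairGap (lam i) (lam j) :=
        Finset.sum_le_sum fun _ _ =>
          Finset.sum_le_univ_sum_of_nonneg fun _ => pairGap_nonneg _ _
    _ ≤ gapInvariant lam :=
        Finset.sum_le_univ_sum_of_nonneg fun _ => Finset.sum_nonneg fun _ _ => pairGap_nonneg _ _

lemma two_mul_pairGap_le_gapInvariant (i j : ι) :
    2 * pairGap (lam i) (lam j) ≤ gapInvariant lam := by
  classical
  rcases eq_or_ne i j with rfl | hij
  · simpa only [pairGap_self, mul_zero] using gapInvariant_nonneg lam
  · have hsum := sum_sum_pairGap_le_gapInvariant lam {i, j}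
    simp only [Finset.sum_pair hij, pairGap_self] at hsum
    linarith [pairGap_comm (lam i) (lam j)]

lemma two_mul_sum_pairGap_le_gapInvariant {i j k : ι} (hij : i ≠ j) (hik : i ≠ k) (hjk : j ≠ k) :
    2 * (pairGap (lam i) (lam j) + pairGap (lam j) (lam k) + pairGap (lam k) (lam i)) ≤
      gapInvariant lam := by
  classical
  have hi : i ∉ ({j, k} : Finset ι) := by simp [hij, hik]
  have hsum := sum_sum_pairGap_le_gapInvariant lam {i, j, k}
  simp only [Finset.sum_insert hi, Finset.sum_pair hjk, pairGap_self] at hsum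
  linarith [pairGap_comm (lam i) (lam j), pairGap_comm (lam j) (lam k),
    pairGap_comm (lam k) (lam i)]

end Sums

end PairGap

section Constant

lemma rpow_one_third_pow_three {x : ℝ} (hx : 0 ≤ x) : (x ^ ((1 : ℝ) / 3)) ^ 3 = x := by
  simpa using Real.rpow_inv_natCast_pow hx three_ne_zero

lemma le_mul_rpow_one_third {x c y : ℝ} (hy : 0 ≤ y) (hxy : x ^ 3 ≤ c ^ 3 * y) :
    x ≤ c * y ^ ((1 : ℝ) / 3) := by
  refine Odd.pow_le_pow (n := 3) (by decide) |>.1 ?_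
  rwa [mul_pow, rpow_one_third_pow_three hy]

lemma C₁_nonneg : 0 ≤ C₁ := by
  unfold C₁
  positivity

lemma C₁_pow_three : C₁ ^ 3 = 24 * √6 - 54 := by
  have hsqrt : √6 ^ 2 = (6 : ℝ) := Real.sq_sqrt (by norm_num)
  have hden : (0 : ℝ) < 21 * √6 + 103 / 2 := by positivity
  rw [C₁, div_pow, rpow_one_third_pow_three hden.le, div_eq_iff hden.ne']
  linear_combination (8 * √6 - 468) * hsqrt

lemma four_le_C₁_pow_three : 4 ≤ C₁ ^ 3 := by
  have hsqrt : 29 / 12 ≤ √6 := Real.le_sqrt_of_sq_le (by norm_num)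
  linarith [C₁_pow_three]

/-- Equality holds at `a = (2 - √6) b`, which is where the value of `C₁` comes from. -/
lemma neg_pow_three_le_C₁_pow_three_mul_pairGap (a b : ℝ) :
    (-(a ^ 2 + 4 * a * b)) ^ 3 ≤ C₁ ^ 3 * (2 * pairGap a b) := by
  have hsqrt : √6 ^ 2 = (6 : ℝ) := Real.sq_sqrt (by norm_num)
  have htwo : 2 ≤ √6 := Real.le_sqrt_of_sq_le (by norm_num)
  have hcoeff : 0 ≤ 28 * √6 - 52 := by linarith
  have hfactor : C₁ ^ 3 * (2 * pairGap a b) - (-(a ^ 2 + 4 * a * b)) ^ 3 =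
      a ^ 2 * (a + (√6 - 2) * b) ^ 2 * ((a + (8 - √6) * b) ^ 2 + (28 * √6 - 52) * b ^ 2) := by
    rw [C₁_pow_three, pairGap]
    linear_combination
      a ^ 2 * b ^ 2 * (2 * a ^ 2 - 44 * a * b - (√6 ^ 2 + 8 * √6 - 26) * b ^ 2) * hsqrt
  exact sub_nonneg.1 (hfactor ▸ by positivity)

end Constant

section Coefficient

variable {ι : Type*} [Fintype ι] (lam : ι → ℝ)

lemma neg_sq_add_four_mul_le (i j : ι) :
    -(lam i ^ 2 + 4 * lam i * lam j) ≤ C₁ * gapInvariant lam ^ ((1 : ℝ) / 3) :=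
  le_mul_rpow_one_third (gapInvariant_nonneg lam) <|
    (neg_pow_three_le_C₁_pow_three_mul_pairGap _ _).trans <|
      mul_le_mul_of_nonneg_left (two_mul_pairGap_le_gapInvariant lam i j) (pow_nonneg C₁_nonneg 3)

lemma neg_two_mul_add_le_of_ne {i j k : ι} (hij : i ≠ j) (hik : i ≠ k) (hjk : j ≠ k) :
    -2 * (lam i * lam j + lam j * lam k + lam k * lam i) ≤
      C₁ * gapInvariant lam ^ ((1 : ℝ) / 3) := by
  refine le_mul_rpow_one_third (gapInvariant_nonneg lam) ?_
  calc (-2 * (lam i * lam j + lam j * lam k + lam k * lam i)) ^ 3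
      = 8 * (-(lam i * lam j + lam j * lam k + lam k * lam i)) ^ 3 := by ring
    _ ≤ 4 * gapInvariant lam := by
        linarith [neg_pow_three_le_sum_pairGap (lam i) (lam j) (lam k),
          two_mul_sum_pairGap_le_gapInvariant lam hij hik hjk]
    _ ≤ C₁ ^ 3 * gapInvariant lam :=
        mul_le_mul_of_nonneg_right four_le_C₁_pow_three (gapInvariant_nonneg lam)

lemma sq_sub_four_mul_le (i j : ι) :
    lam j ^ 2 - 4 * lam i * lam j ≤
      ∑ l, lam l ^ 2 + C₁ * gapInvariant lam ^ ((1 : ℝ) / 3) := by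
  classical
  rcases eq_or_ne i j with rfl | hij
  · have hsum : 0 ≤ ∑ l, lam l ^ 2 := Finset.sum_nonneg fun _ _ => sq_nonneg _
    have hgap : 0 ≤ C₁ * gapInvariant lam ^ ((1 : ℝ) / 3) :=
      mul_nonneg C₁_nonneg (Real.rpow_nonneg (gapInvariant_nonneg lam) _)
    linarith [sq_nonneg (lam i)]
  · have hsum : ∑ l ∈ {i, j}, lam l ^ 2 ≤ ∑ l, lam l ^ 2 :=
      Finset.sum_le_univ_sum_of_nonneg fun _ => sq_nonneg _
    rw [Finset.sum_pair hij] at hsum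
    linarith [neg_sq_add_four_mul_le lam i j]

lemma sum_sq_sub_two_mul_le (i j k : ι) :
    lam i ^ 2 + lam j ^ 2 + lam k ^ 2 - 2 * (lam i * lam j + lam j * lam k + lam k * lam i) ≤
      ∑ l, lam l ^ 2 + C₁ * gapInvariant lam ^ ((1 : ℝ) / 3) := by
  classical
  rcases eq_or_ne i j with rfl | hij
  · linarith [sq_sub_four_mul_le lam i k]
  rcases eq_or_ne j k with rfl | hjk
  · linarith [sq_sub_four_mul_le lam j i]
  rcases eq_or_ne i k with rfl | hik
  · linarith [sq_sub_four_mul_le lam i j]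
  have hi : i ∉ ({j, k} : Finset ι) := by simp [hij, hik]
  have hsum : ∑ l ∈ {i, j, k}, lam l ^ 2 ≤ ∑ l, lam l ^ 2 :=
    Finset.sum_le_univ_sum_of_nonneg fun _ => sq_nonneg _
  rw [Finset.sum_insert hi, Finset.sum_pair hjk] at hsum
  linarith [neg_two_mul_add_le_of_ne lam hij hik hjk]

end Coefficient

section Rotation

variable {ι R : Type*} [Fintype ι] [CommSemiring R] {w : ι → ι → ι → R}

lemma sum_mul_rotate (hw : ∀ i j k, w i j k = w j k i) (c : ι → ι → ι → R) :
    ∑ i, ∑ j, ∑ k, w i j k * c i j k = ∑ i, ∑ j, ∑ k, w i j k * c j k i :=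
  calc ∑ i, ∑ j, ∑ k, w i j k * c i j k
      = ∑ i, ∑ j, ∑ k, w j k i * c j k i := Finset.sum_comm_cycle
    _ = ∑ i, ∑ j, ∑ k, w i j k * c j k i := by
        refine Finset.sum_congr rfl fun i _ => Finset.sum_congr rfl fun j _ =>
          Finset.sum_congr rfl fun k _ => ?_
        rw [hw i j k]

lemma three_mul_sum_mul_eq_sum_mul_rotations (hw : ∀ i j k, w i j k = w j k i)
    (c : ι → ι → ι → R) :
    3 * ∑ i, ∑ j, ∑ k, w i j k * c i j k =
      ∑ i, ∑ j, ∑ k, w i j k * (c i j k + c j k i + c k i j) := by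
  have hrotate := sum_mul_rotate hw c
  have hrotate_twice := hrotate.trans (sum_mul_rotate hw fun i j k => c j k i)
  simp only [mul_add, Finset.sum_add_distrib]
  rw [← hrotate_twice, ← hrotate]
  ring

end Rotation

theorem xi_refined_estimate_general {ι : Type*} [Fintype ι] (lam : ι → ℝ) {w : ι → ι → ι → ℝ}
    (hw_nonneg : ∀ i j k, 0 ≤ w i j k) (hw_rotate : ∀ i j k, w i j k = w j k i) :
    3 * ∑ i, ∑ j, ∑ k, w i j k * (lam k ^ 2 - 2 * lam i * lam j) ≤
      (∑ i, lam i ^ 2 + C₁ * gapInvariant lam ^ ((1 : ℝ) / 3)) * ∑ i, ∑ j, ∑ k, w i j k := by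
  rw [three_mul_sum_mul_eq_sum_mul_rotations hw_rotate]
  simp only [Finset.mul_sum]
  refine Finset.sum_le_sum fun i _ => Finset.sum_le_sum fun j _ => Finset.sum_le_sum fun k _ => ?_
  rw [mul_comm]
  refine mul_le_mul_of_nonneg_right ?_ (hw_nonneg i j k)
  linarith [sum_sq_sub_two_mul_le lam i j k]

theorem xi_refined_estimate (n : ℕ) (hn : 1 ≤ n) (lam : Fin n → ℝ)
    (h : Fin n → Fin n → Fin n → ℝ)
    (hsymm₁ : ∀ i j k : Fin n, h i j k = h j i k)
    (hsymm₂ : ∀ i j k : Fin n, h i j k = h i k j) :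
    3 * (∑ i : Fin n, ∑ j : Fin n, ∑ k : Fin n,
        (h i j k) ^ 2 * ((lam k) ^ 2 - 2 * lam i * lam j)) ≤
      ((∑ i : Fin n, (lam i) ^ 2) +
          C₁ * (∑ i : Fin n, ∑ j : Fin n,
            (lam i - lam j) ^ 2 * (lam i) ^ 2 * (lam j) ^ 2) ^ ((1 : ℝ) / 3)) *
        (∑ i : Fin n, ∑ j : Fin n, ∑ k : Fin n, (h i j k) ^ 2) :=
  xi_refined_estimate_general lam (fun i j k => sq_nonneg (h i j k)) fun i j k => by
    rw [hsymm₁ i j k, hsymm₂ j i k]
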